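/- For every integer n ≥ 2 and every binary word x ∈ Z_2^n, the size of the single palindromic deletion sphere for deletion length ℓ = 2 satisfies |S_{π^δ,2}(x)| = r_{I,2}(x) + r_{≥4}(x) + 1, where r_{I,2}(x) is the number of runs of x of length exactly 2 located in the interior of x (i.e., entirely between positions 2 and n−1, touching neither the first nor the last position) and r_{≥4}(x) is the number of runs of x of length at least 4. -/

import Mathlib

namespace DupPaper

variable {α : Type*}

/-- `y` is obtained from `x` by one tandem duplication of length `ℓ`. -/
def TDup (ℓ : ℕ) (x y : List α) : Prop :=
  ∃ u v w : List α, v.length = ℓ ∧ x = u ++ v ++ w ∧ y = u ++ v ++ v ++ w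

/-- `y` is obtained from `x` by one tandem deletion of length `ℓ`. -/
def TDel (ℓ : ℕ) (x y : List α) : Prop :=
  ∃ u v w : List α, v.length = ℓ ∧ x = u ++ v ++ v ++ w ∧ y = u ++ v ++ w

/-- `y` is obtained from `x` by one palindromic duplication of length `ℓ`. -/
def PDup (ℓ : ℕ) (x y : List α) : Prop :=
  ∃ u v w : List α, v.length = ℓ ∧ x = u ++ v ++ w ∧ y = u ++ v ++ v.reverse ++ w

/-- `y` is obtained from `x` by one palindromic deletion of length `ℓ`. -/
def PDel (ℓ : ℕ) (x y : List α) : Prop :=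
  ∃ u v w : List α, v.length = ℓ ∧ x = u ++ v ++ v.reverse ++ w ∧ y = u ++ v ++ w

/-- `y` is reached from `x` by exactly `k` steps of the relation `rel`. -/
def reachK (rel : List α → List α → Prop) : ℕ → List α → List α → Prop
  | 0, x, y => x = y
  | k + 1, x, y => ∃ z, rel x z ∧ reachK rel k z y

/-- The sphere of all words reachable from `x` by at most `t` operations of type `rel`
(in particular it contains `x` itself). -/
def sphere (rel : List α → List α → Prop) (t : ℕ) (x : List α) : Set (List α) :=
  {y | ∃ k ≤ t, reachK rel k x y}

/-- A code `C` is `t`-error correcting for the error type `rel` if distinct codewords have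
disjoint spheres. -/
def Correcting (rel : List α → List α → Prop) (t : ℕ) (C : Set (List α)) : Prop :=
  ∀ c₁ ∈ C, ∀ c₂ ∈ C, (sphere rel t c₁ ∩ sphere rel t c₂).Nonempty → c₁ = c₂

/-- The list of maximal runs (maximal blocks of identical consecutive symbols) of a word. -/
def runs [DecidableEq α] : List α → List (List α)
  | [] => []
  | a :: rest =>
    match runs rest with
    | [] => [[a]]
    | r :: rs => if r.head? = some a then (a :: r) :: rs else [a] :: r :: rs

/-- `r(x)`: the number of runs of `x`. -/
def numRuns [DecidableEq α] (x : List α) : ℕ := (runs x).length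

/-- `r_i(x)`: the number of runs of `x` of length exactly `i`. -/
def numRunsEq [DecidableEq α] (x : List α) (i : ℕ) : ℕ :=
  ((runs x).filter (fun r => r.length = i)).length

/-- `r_{≥ i}(x)`: the number of runs of `x` of length at least `i`. -/
def numRunsGe [DecidableEq α] (x : List α) (i : ℕ) : ℕ :=
  ((runs x).filter (fun r => i ≤ r.length)).length

/-- `r_{I,2}(x)`: the number of runs of length exactly `2` located in the interior of `x`,
i.e. runs that are neither the first nor the last run of `x`. -/
def numInteriorRuns2 [DecidableEq α] (x : List α) : ℕ :=
  ((((runs x).drop 1).dropLast).filter (fun r => r.length = 2)).length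

/-- The second component `v` of the `ℓ`-step derivative `φ_ℓ(x) = (u, v)`:
`v = (x_{ℓ+1}, …, x_n) − (x_1, …, x_{n−ℓ})` componentwise in `Z_q`. -/
def derivV (q ℓ : ℕ) (x : List (ZMod q)) : List (ZMod q) :=
  List.zipWith (· - ·) (x.drop ℓ) x

/-- Hamming weight: the number of nonzero entries. -/
def wtH {q : ℕ} (v : List (ZMod q)) : ℕ := (v.filter (fun a => a ≠ 0)).length

/-- The lengths `(m_0, m_1, …, m_p)` of the (possibly empty) maximal zero runs of `v`,
where `v = (0^{m_0}, w_1, 0^{m_1}, w_2, …, w_p, 0^{m_p})` with all `w_i ≠ 0`. -/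
def zeroRunLengths {q : ℕ} : List (ZMod q) → List ℕ
  | [] => [0]
  | a :: rest =>
    let t := zeroRunLengths rest
    if a = 0 then
      match t with
      | [] => [1]
      | m :: ms => (m + 1) :: ms
    else 0 :: t

/-- The `ℓ`-zero signature `σ_ℓ(v) = (⌊m_0/ℓ⌋, …, ⌊m_p/ℓ⌋)` of `v = derivV q ℓ x`. -/
def sig (q ℓ : ℕ) (x : List (ZMod q)) : List ℕ :=
  (zeroRunLengths (derivV q ℓ x)).map (· / ℓ)

/-- The trunk `μ_ℓ(v)`: every maximal zero run of length `m` is shortened to length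
`m mod ℓ`. -/
def trunk (q ℓ : ℕ) (v : List (ZMod q)) : List (ZMod q) :=
  ((runs v).map (fun r =>
    if r.head? = some (0 : ZMod q) then List.replicate (r.length % ℓ) (0 : ZMod q) else r)).flatten

/-- The root `ρ_ℓ(x) = (u, μ_ℓ(v))` where `φ_ℓ(x) = (u, v)` is the `ℓ`-step derivative. -/
def root (q ℓ : ℕ) (x : List (ZMod q)) : List (ZMod q) × List (ZMod q) :=
  (x.take ℓ, trunk q ℓ (derivV q ℓ x))

/-- `ℓ1`-distance of two lists of naturals. -/
def l1diff (a b : List ℕ) : ℕ := (List.zipWith (fun s t => max s t - min s t) a b).sum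

/-- The tandem duplication distance `d_{τ,ℓ}`. -/
def tdDist (q ℓ : ℕ) (x₁ x₂ : List (ZMod q)) : ℕ∞ :=
  if root q ℓ x₁ = root q ℓ x₂ then (l1diff (sig q ℓ x₁) (sig q ℓ x₂) : ℕ∞) else ⊤

/-- The palindromic duplication `π_{i,ℓ}(x) = (u v v^R w)` at position `i`,
where `x = (u v w)`, `|u| = i`, `|v| = ℓ`. -/
def pdupAt (i ℓ : ℕ) (x : List α) : List α :=
  x.take (i + ℓ) ++ ((x.drop i).take ℓ).reverse ++ x.drop (i + ℓ)

/-- The result `(u v w)` of the palindromic deletion `π^δ_{i,ℓ}` applied to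
`x = (u v v^R w)` with `|u| = i`, `|v| = ℓ`. -/
def pdelAt (i ℓ : ℕ) (x : List α) : List α :=
  x.take (i + ℓ) ++ x.drop (i + 2 * ℓ)

/-- The palindromic deletion `π^δ_{i,ℓ}` is defined at position `i` of `x`, i.e. `x` has the
form `(u v v^R w)` with `|u| = i` and `|v| = ℓ`. -/
def PDelDefinedAt (q ℓ i : ℕ) (x : List (ZMod q)) : Prop :=
  ∃ u v w : List (ZMod q), u.length = i ∧ v.length = ℓ ∧ x = u ++ v ++ v.reverse ++ w

/-- `A(n', ℓ', ω)`: the number of words in `Z_q^{n'}` whose maximal zero runs all have length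
at most `ℓ'` and whose Hamming weight is `ω`. -/
noncomputable def Acount (q n' ℓ' ω : ℕ) : ℕ :=
  {x : Fin n' → ZMod q | wtH (List.ofFn x) = ω ∧
    ∀ r ∈ runs (List.ofFn x), r.head? = some (0 : ZMod q) → r.length ≤ ℓ'}.ncard

/-- Integer binomial coefficient with the conventions `C(a,b) = 0` for `a ≥ 0 > b` or
`0 ≤ a < b`, `C(-1,-1) = 1`, and `C(a,-1) = 0` for `a ≥ 0`. -/
def ichoose (a b : ℤ) : ℕ :=
  if a = -1 ∧ b = -1 then 1
  else if 0 ≤ a ∧ 0 ≤ b then Nat.choose a.toNat b.toNat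
  else 0

/-- `r^{(0)}(A^π_ℓ(x))`: the number of maximal blocks of consecutive all-zero columns of the
matrix `A^π_ℓ(x) ∈ Z_q^{ℓ × (n−2ℓ+1)}` whose entry in row `s` and column `c`
(`1 ≤ s ≤ ℓ`, `1 ≤ c ≤ n−2ℓ+1`) is `x_{2ℓ+c−s} − x_{c+s−1}`. -/
def zeroColBlocks (q ℓ n : ℕ) (x : List (ZMod q)) : ℕ :=
  ((runs ((List.range (n - 2 * ℓ + 1)).map (fun c =>
      (List.range ℓ).all (fun s =>
        x.getD (2 * ℓ + c - s - 1) (0 : ZMod q) = x.getD (c + s) (0 : ZMod q))))).filter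
    (fun r => r.head? = some true)).length

/-!
A deletion of length `2` in `a :: x` either takes place inside `x`, or it turns `a :: x = a b b a w`
into `a b w`. The latter word is obtained inside `x` as well exactly when `a :: x` starts with
`aaaaa`. Hence prepending `a` produces a new word precisely when it completes a prefix `aaaa` that
is not part of `aaaaa`, which is when the first run reaches length `4`, or a prefix `abba` with
`b ≠ a`, which is when a run `bb` becomes enclosed by two runs of the same symbol. Over a binary
alphabet every interior run is enclosed in this way.
-/

lemma sphere_one (rel : List α → List α → Prop) (x : List α) :
    sphere rel 1 x = insert x {y | rel x y} := by
  ext y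
  simp only [sphere, Nat.le_one_iff_eq_zero_or_eq_one, or_and_right, exists_or, exists_eq_left,
    reachK, exists_eq_right, Set.mem_ofPred_eq, Set.mem_insert_iff, eq_comm (a := x)]

section PalindromicDeletion

variable {ℓ : ℕ} {x y : List α}

lemma PDel.length_add (h : PDel ℓ x y) : y.length + ℓ = x.length := by
  obtain ⟨u, v, w, rfl, rfl, rfl⟩ := h
  simp only [List.length_append, List.length_reverse]
  omega

lemma PDel.sublist (h : PDel ℓ x y) : y.Sublist x := by
  obtain ⟨u, v, w, -, rfl, rfl⟩ := h
  exact (List.sublist_append_left _ _).append_right w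

lemma pdel_cons_iff {a : α} :
    PDel ℓ (a :: x) y ↔ (∃ y', PDel ℓ x y' ∧ a :: y' = y) ∨
      ∃ v w, v.length = ℓ ∧ a :: x = v ++ v.reverse ++ w ∧ y = v ++ w := by
  constructor
  · rintro ⟨_ | ⟨c, u⟩, v, w, hv, hx, rfl⟩
    · exact Or.inr ⟨v, w, hv, hx, rfl⟩
    · obtain ⟨rfl, rfl⟩ := List.cons_eq_cons.mp hx
      exact Or.inl ⟨u ++ v ++ w, ⟨u, v, w, hv, rfl, rfl⟩, rfl⟩
  · rintro (⟨y', ⟨u, v, w, hv, rfl, rfl⟩, rfl⟩ | ⟨v, w, hv, hx, rfl⟩)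
    · exact ⟨a :: u, v, w, hv, rfl, rfl⟩
    · exact ⟨[], v, w, hv, hx, rfl⟩

/-- The set of words obtained from `x` by exactly one palindromic deletion of length `ℓ`; for
`ℓ > 0` it is the sphere of radius `1` without its center. -/
def pdelSet (ℓ : ℕ) (x : List α) : Set (List α) := {y | PDel ℓ x y}

lemma finite_pdelSet (ℓ : ℕ) (x : List α) : (pdelSet ℓ x).Finite :=
  x.sublists.finite_toSet.subset fun _ h ↦ List.mem_sublists.mpr (PDel.sublist h)

lemma pdelSet_nil (hℓ : 0 < ℓ) : pdelSet ℓ ([] : List α) = ∅ :=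
  Set.eq_empty_of_forall_notMem fun _ h ↦ by
    have hlength := PDel.length_add h
    simp only [List.length_nil] at hlength
    omega

lemma ncard_sphere_pdel_one (hℓ : 0 < ℓ) (x : List α) :
    (sphere (PDel ℓ) 1 x).ncard = (pdelSet ℓ x).ncard + 1 := by
  have self_notMem : x ∉ pdelSet ℓ x := fun h ↦ by
    have hlength := PDel.length_add h
    omega
  rw [sphere_one]
  exact Set.ncard_insert_of_notMem self_notMem (finite_pdelSet ℓ x)

end PalindromicDeletion

lemma pdel_two_cons_iff {a : α} {x y : List α} :
    PDel 2 (a :: x) y ↔ (∃ y', PDel 2 x y' ∧ a :: y' = y) ∨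
      ∃ b w, x = b :: b :: a :: w ∧ y = a :: b :: w := by
  rw [pdel_cons_iff]
  refine or_congr_right ⟨?_, ?_⟩
  · rintro ⟨v, w, hv, hx, rfl⟩
    obtain ⟨c, b, rfl⟩ := List.length_eq_two.mp hv
    obtain ⟨rfl, rfl⟩ := List.cons_eq_cons.mp hx
    exact ⟨b, w, rfl, rfl⟩
  · rintro ⟨b, w, rfl, rfl⟩
    exact ⟨[a, b], w, rfl, rfl, rfl⟩

lemma eq_and_prefix_of_pdel_two_drop {w : List α} :
    ∀ {p q : α}, PDel 2 (p :: q :: w) w → p = q ∧ [p, p] <+: w := by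
  induction w with
  | nil => simp [pdel_two_cons_iff]
  | cons c w ih =>
    intro p q h
    obtain ⟨y, hy, hcons⟩ | ⟨b, z, hx, hy⟩ := pdel_two_cons_iff.mp h
    · obtain ⟨rfl, rfl⟩ := List.cons_eq_cons.mp hcons
      obtain ⟨rfl, hw⟩ := ih hy
      exact ⟨rfl, List.cons_prefix_cons.mpr ⟨rfl, (List.prefix_append [_] [_]).trans hw⟩⟩
    · simp only [List.cons.injEq] at hx hy
      obtain ⟨rfl, rfl, rfl⟩ := hx
      obtain ⟨rfl, -⟩ := hy
      exact ⟨rfl, List.prefix_append [c, c] z⟩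

lemma pdel_two_cons_cons_cons_iff {a b : α} {w : List α} :
    PDel 2 (b :: b :: a :: w) (b :: w) ↔ [a, a, a, a] <+: b :: b :: a :: w := by
  constructor
  · intro h
    obtain ⟨y, hy, hcons⟩ | ⟨c, z, hx, hy⟩ := pdel_two_cons_iff.mp h
    · obtain rfl := (List.cons_eq_cons.mp hcons).2
      obtain ⟨rfl, hw⟩ := eq_and_prefix_of_pdel_two_drop hy
      simpa using (List.prefix_append [b] [b]).trans hw
    · simp only [List.cons.injEq, true_and] at hx hy
      obtain ⟨rfl, rfl, rfl⟩ := hx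
      simp
  · rintro ⟨w', h⟩
    simp only [List.cons_append, List.nil_append, List.cons.injEq] at h
    obtain ⟨rfl, -, -, rfl⟩ := h
    exact ⟨[], [a, a], w', rfl, rfl, rfl⟩

lemma pdelSet_two_cons_of_prefix {a b : α} {w : List α} :
    pdelSet 2 (a :: b :: b :: a :: w) =
      insert (a :: b :: w) ((a :: ·) '' pdelSet 2 (b :: b :: a :: w)) := by
  ext y
  refine pdel_two_cons_iff.trans (or_comm.trans (or_congr_left ⟨?_, ?_⟩))
  · rintro ⟨c, z, hx, rfl⟩
    simp only [List.cons.injEq, true_and] at hx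
    obtain ⟨rfl, -, rfl⟩ := hx
    rfl
  · rintro rfl
    exact ⟨b, w, rfl, rfl⟩

lemma pdelSet_two_cons_of_not_prefix {a : α} {x : List α}
    (h : ¬((∃ b, [b, b, a] <+: x) ∧ ¬[a, a, a, a] <+: x)) :
    pdelSet 2 (a :: x) = (a :: ·) '' pdelSet 2 x := by
  ext y
  refine pdel_two_cons_iff.trans (or_iff_left_of_imp ?_)
  rintro ⟨b, w, rfl, rfl⟩
  have hprefix : [a, a, a, a] <+: b :: b :: a :: w :=
    of_not_not fun hn ↦ h ⟨⟨b, List.prefix_append [b, b, a] w⟩, hn⟩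
  exact ⟨b :: w, pdel_two_cons_cons_cons_iff.mpr hprefix, rfl⟩

open Classical in
lemma ncard_pdelSet_two_cons (a : α) (x : List α) :
    (pdelSet 2 (a :: x)).ncard = (pdelSet 2 x).ncard +
      if (∃ b, [b, b, a] <+: x) ∧ ¬[a, a, a, a] <+: x then 1 else 0 := by
  have cons_injective : Function.Injective (a :: · : List α → List α) := List.cons_injective
  split_ifs with h
  · obtain ⟨⟨b, w, rfl⟩, hprefix⟩ := h
    have new_notMem : a :: b :: w ∉ (a :: ·) '' pdelSet 2 (b :: b :: a :: w) := fun hmem ↦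
      hprefix (pdel_two_cons_cons_cons_iff.mp (cons_injective.mem_set_image.mp hmem))
    simp only [List.cons_append, List.nil_append]
    rw [pdelSet_two_cons_of_prefix,
      Set.ncard_insert_of_notMem new_notMem ((finite_pdelSet _ _).image _),
      Set.ncard_image_of_injective _ cons_injective]
  · rw [pdelSet_two_cons_of_not_prefix h, Set.ncard_image_of_injective _ cons_injective,
      Nat.add_zero]

lemma exists_eq_replicate_append (a : α) (x : List α) :
    ∃ k w, w.head? ≠ some a ∧ x = List.replicate k a ++ w := by
  induction x with
  | nil => exact ⟨0, [], by simp, rfl⟩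
  | cons b x ih =>
    by_cases hb : b = a
    · obtain ⟨k, w, hw, rfl⟩ := ih
      exact ⟨k + 1, w, hw, by rw [hb]; rfl⟩
    · exact ⟨0, b :: x, by simpa using hb, rfl⟩

lemma replicate_prefix_replicate_append_iff {a : α} {w : List α} (h : w.head? ≠ some a)
    {i k : ℕ} : List.replicate i a <+: List.replicate k a ++ w ↔ i ≤ k := by
  induction i generalizing k with
  | zero => simp
  | succ i ih =>
    cases k with
    | zero => cases w <;> simp_all [List.replicate_succ, eq_comm (a := a)]
    | succ k => simp [List.replicate_succ, ih]

lemma pair_prefix_replicate_append_iff {a b : α} {w : List α} (hba : b ≠ a)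
    (h : w.head? ≠ some b) {k : ℕ} :
    [b, a] <+: List.replicate k b ++ w ↔ k = 1 ∧ w.head? = some a := by
  match k with
  | 0 => cases w <;> simp_all [eq_comm (a := b)]
  | 1 => cases w <;> simp [eq_comm (a := a)]
  | k + 2 => simp [List.replicate_succ, hba.symm]

section Runs

variable [DecidableEq α]

lemma exists_runs_cons (a : α) (x : List α) : ∃ r R, runs (a :: x) = (a :: r) :: R := by
  rw [runs]
  split
  · exact ⟨_, _, rfl⟩
  · split_ifs <;> exact ⟨_, _, rfl⟩

lemma runs_cons_self {a : α} {x r : List α} {R : List (List α)}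
    (h : runs (a :: x) = (a :: r) :: R) : runs (a :: a :: x) = (a :: a :: r) :: R := by
  rw [runs, h]
  exact if_pos rfl

lemma runs_cons_of_head?_ne {a : α} {x : List α} (h : x.head? ≠ some a) :
    runs (a :: x) = [a] :: runs x := by
  cases x with
  | nil => rfl
  | cons b y =>
    obtain ⟨r, R, hR⟩ := exists_runs_cons b y
    rw [runs, hR]
    exact if_neg h

lemma runs_replicate_append {a : α} {w : List α} (h : w.head? ≠ some a) (k : ℕ) :
    runs (List.replicate (k + 1) a ++ w) = List.replicate (k + 1) a :: runs w := by
  induction k with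
  | zero => exact runs_cons_of_head?_ne h
  | succ k ih => exact runs_cons_self ih

lemma numRunsGe_replicate_append {a : α} {w : List α} (h : w.head? ≠ some a) (i k : ℕ) :
    numRunsGe (List.replicate k a ++ w) (i + 1) =
      numRunsGe w (i + 1) + if i + 1 ≤ k then 1 else 0 := by
  cases k with
  | zero => simp
  | succ k =>
    rw [numRunsGe, runs_replicate_append h, numRunsGe]
    simp only [List.filter_cons, List.length_replicate, decide_eq_true_eq]
    split_ifs <;> rfl

lemma numRunsGe_cons (a : α) (x : List α) (i : ℕ) :
    numRunsGe (a :: x) (i + 1) = numRunsGe x (i + 1) +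
      if List.replicate i a <+: x ∧ ¬List.replicate (i + 1) a <+: x then 1 else 0 := by
  obtain ⟨k, w, hw, rfl⟩ := exists_eq_replicate_append a x
  rw [← List.cons_append, ← List.replicate_succ]
  simp only [numRunsGe_replicate_append hw, replicate_prefix_replicate_append_iff hw]
  split_ifs <;> omega

end Runs

section EnclosedRuns

variable [DecidableEq α]

/-- The number of blocks of length `2` in a list of blocks whose two neighboring blocks both exist
and start with the same symbol. -/
def countEnclosed2 : List (List α) → ℕ
  | r :: s :: t :: R =>
    countEnclosed2 (s :: t :: R) + if s.length = 2 ∧ r.head? = t.head? then 1 else 0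
  | _ => 0

/-- The number of interior runs of length exactly `2` of `x` whose two neighboring runs consist of
the same symbol. It takes the place of `numInteriorRuns2` over an arbitrary alphabet. -/
def numEnclosedRuns2 (x : List α) : ℕ := countEnclosed2 (runs x)

lemma countEnclosed2_cons_congr {r r' : List α} (h : r.head? = r'.head?) (R : List (List α)) :
    countEnclosed2 (r :: R) = countEnclosed2 (r' :: R) := by
  match R with
  | [] | [_] => rfl
  | s :: t :: R => simp only [countEnclosed2, h]

lemma numEnclosedRuns2_cons_self (a : α) (x : List α) :
    numEnclosedRuns2 (a :: a :: x) = numEnclosedRuns2 (a :: x) := by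
  obtain ⟨r, R, hR⟩ := exists_runs_cons a x
  rw [numEnclosedRuns2, runs_cons_self hR, numEnclosedRuns2, hR]
  exact countEnclosed2_cons_congr (r := a :: a :: r) (r' := a :: r) rfl R

lemma numEnclosedRuns2_cons_of_ne {a b : α} (hba : b ≠ a) (x : List α) :
    numEnclosedRuns2 (a :: b :: x) =
      numEnclosedRuns2 (b :: x) + if [b, a] <+: x then 1 else 0 := by
  obtain ⟨k, w, hw, rfl⟩ := exists_eq_replicate_append b x
  have hruns : runs (b :: (List.replicate k b ++ w)) = List.replicate (k + 1) b :: runs w :=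
    runs_replicate_append hw k
  rw [numEnclosedRuns2, runs_cons_of_head?_ne (by simpa using hba), numEnclosedRuns2, hruns]
  simp only [pair_prefix_replicate_append_iff hba hw]
  cases w with
  | nil => simp [runs, countEnclosed2]
  | cons c w =>
    obtain ⟨r, R, hR⟩ := exists_runs_cons c w
    simp [hR, countEnclosed2, eq_comm (a := a)]

open Classical in
lemma numEnclosedRuns2_cons (a : α) (x : List α) :
    numEnclosedRuns2 (a :: x) =
      numEnclosedRuns2 x + if ∃ b ≠ a, [b, b, a] <+: x then 1 else 0 := by
  cases x with
  | nil => simp [numEnclosedRuns2, runs, countEnclosed2]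
  | cons b x =>
    obtain rfl | hba := eq_or_ne b a
    · simp [numEnclosedRuns2_cons_self]
    · simp [numEnclosedRuns2_cons_of_ne hba, hba]

lemma isChain_runs (x : List α) :
    (runs x).IsChain fun r s ↦ ∃ a b, r.head? = some a ∧ s.head? = some b ∧ a ≠ b := by
  match x with
  | [] => exact .nil
  | [a] => exact .singleton _
  | a :: b :: x =>
    have ih := isChain_runs (b :: x)
    obtain ⟨r, R, hR⟩ := exists_runs_cons b x
    obtain rfl | hba := eq_or_ne b a
    · rw [runs_cons_self hR]
      rw [hR] at ih
      exact ih.imp_head fun ⟨c, d, hc, h⟩ ↦ ⟨c, d, hc, h⟩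
    · rw [runs_cons_of_head?_ne (by simpa using hba), hR]
      rw [hR] at ih
      exact List.isChain_cons_cons.mpr ⟨⟨a, b, rfl, rfl, hba.symm⟩, ih⟩

lemma countEnclosed2_eq_of_isChain (binary : ∀ a b c : α, a ≠ b → b ≠ c → a = c)
    {R : List (List α)}
    (hR : R.IsChain fun r s ↦ ∃ a b, r.head? = some a ∧ s.head? = some b ∧ a ≠ b) :
    countEnclosed2 R = ((R.drop 1).dropLast.filter (·.length = 2)).length := by
  match R with
  | [] | [_] | [_, _] => rfl
  | r :: s :: t :: R =>
    obtain ⟨⟨a, b, hr, hs, hab⟩, hR⟩ := List.isChain_cons_cons.mp hR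
    obtain ⟨⟨b', c, hs', ht, hbc⟩, -⟩ := List.isChain_cons_cons.mp hR
    obtain rfl : b = b' := Option.some.inj (hs.symm.trans hs')
    have enclosed : r.head? = t.head? := by rw [hr, ht, binary a b c hab hbc]
    rw [countEnclosed2, countEnclosed2_eq_of_isChain binary hR]
    simp only [enclosed, List.drop_succ_cons, List.drop_zero, List.dropLast_cons_cons,
      List.filter_cons]
    split_ifs <;> simp_all

lemma numEnclosedRuns2_eq_numInteriorRuns2 (binary : ∀ a b c : α, a ≠ b → b ≠ c → a = c)
    (x : List α) : numEnclosedRuns2 x = numInteriorRuns2 x :=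
  countEnclosed2_eq_of_isChain binary (isChain_runs x)

end EnclosedRuns

open Classical in
lemma ite_palindrome_prefix_eq_add (a : α) (x : List α) :
    (if (∃ b, [b, b, a] <+: x) ∧ ¬[a, a, a, a] <+: x then 1 else 0) =
      (if ∃ b ≠ a, [b, b, a] <+: x then 1 else 0) +
        if [a, a, a] <+: x ∧ ¬[a, a, a, a] <+: x then 1 else 0 := by
  by_cases enclosed : ∃ b ≠ a, [b, b, a] <+: x
  · obtain ⟨b, hba, w, rfl⟩ := enclosed
    simp [hba, hba.symm]
  · have exists_iff : (∃ b, [b, b, a] <+: x) ↔ [a, a, a] <+: x := by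
      refine ⟨fun ⟨b, hb⟩ ↦ ?_, fun h ↦ ⟨a, h⟩⟩
      obtain rfl : b = a := of_not_not fun hba ↦ enclosed ⟨b, hba, hb⟩
      exact hb
    simp only [exists_iff, if_neg enclosed, Nat.zero_add]

lemma ncard_pdelSet_two [DecidableEq α] (x : List α) :
    (pdelSet 2 x).ncard = numEnclosedRuns2 x + numRunsGe x 4 := by
  induction x with
  | nil => simp [pdelSet_nil, numEnclosedRuns2, countEnclosed2, numRunsGe, runs]
  | cons a x ih =>
    rw [ncard_pdelSet_two_cons, ite_palindrome_prefix_eq_add, ih, numEnclosedRuns2_cons,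
      numRunsGe_cons a x 3]
    convert Nat.add_add_add_comm _ _ _ _ <;> rfl

theorem stmt11_general [DecidableEq α] (x : List α) :
    (sphere (PDel 2) 1 x).ncard = numEnclosedRuns2 x + numRunsGe x 4 + 1 := by
  rw [ncard_sphere_pdel_one two_pos, ncard_pdelSet_two]

/-- The size of the single palindromic deletion sphere for `ℓ = 2` over `Z_2`:
`|S_{π^δ,2}(x)| = r_{I,2}(x) + r_{≥4}(x) + 1`. -/
theorem stmt11 (n : ℕ) (hn : 2 ≤ n) (x : List (ZMod 2)) (hx : x.length = n) :
    (sphere (PDel 2) 1 x).ncard = numInteriorRuns2 x + numRunsGe x 4 + 1 := by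
  rw [stmt11_general, numEnclosedRuns2_eq_numInteriorRuns2 (by decide)]

end DupPaper
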